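/- arXiv:2305.07275 — 3 statements merged into one kernel-verified Lean document; each statement's English description precedes it below -/
import Mathlib

section
/- Assume for each player i: (a) X_i ⊆ ℝ^{n_i} is nonempty, convex and closed; (b) K_i : X ⇉ ℝ^{n_i} has nonempty values; (c) P_i(y) is an open subset of ℝ^{n_i} for every y ∈ ∏_i co(cl(K_i(X))). Then every projected solution of the quasi-variational inequality QVI(T,K), where K(x) = ∏_i K_i(x) and T(y) = ∏_i co(((co(P_i(y)) − {y_i})°) ∩ S_i) with S_i the unit sphere of ℝ^{n_i}, is a projected solution of the generalized Nash game Γ = (X_i,K_i,P_i)_i. -/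
open scoped RealInnerProductSpace

/-- `ℝ^m` as a Euclidean space. -/
abbrev Vec (m : ℕ) : Type := EuclideanSpace ℝ (Fin m)

/-- The joint strategy space `ℝ^n = ∏_{i=1}^N ℝ^{n_i}`. -/
abbrev Strat (N : ℕ) (d : Fin N → ℕ) : Type := PiLp 2 fun i : Fin N => Vec (d i)

/-!
A nonzero linear functional is an open map, so a nonzero vector `w` of the polar cone of `S - y` is
strictly negative on `z - y` for `z` in the interior of `S`. Strict negativity at a fixed `z - y`
defines a half-space, hence survives taking convex hulls of such `w`. On the other hand, the
feasible set of the variational inequality is a product, so testing it with a deviation of a single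
player splits it into one inequality per player. If some player had a preferred feasible strategy,
the two signs would clash.
-/

section NormalCone

variable {F : Type*} [NormedAddCommGroup F] [InnerProductSpace ℝ F]

/-- The normal cone to `S` at `y`, that is the polar cone of `S - y`. The point `y` need not belong
to `S`: in the application `S` is the convex hull of the strategies preferred to `y`. -/
def normalCone (S : Set F) (y : F) : Set F :=
  {w | ∀ z ∈ S, ⟪w, z - y⟫ ≤ 0}

theorem inner_sub_neg_of_mem_normalCone {S : Set F} {y z w : F} (hw : w ∈ normalCone S y)
    (hw0 : w ≠ 0) (hz : z ∈ interior S) : ⟪w, z - y⟫ < 0 := by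
  have hS : S ⊆ innerSL ℝ w ⁻¹' Set.Iic ⟪w, y⟫ := fun s hs ↦ by
    simpa [inner_sub_right] using hw s hs
  have hopen : IsOpenMap (innerSL ℝ w) :=
    (innerSL ℝ w).isOpenMap_of_ne_zero (by
      rwa [← norm_ne_zero_iff, innerSL_apply_norm, norm_ne_zero_iff])
  have hlt : innerSL ℝ w z ∈ interior (Set.Iic ⟪w, y⟫) :=
    hopen.interior_preimage_subset_preimage_interior (interior_mono hS hz)
  simpa [inner_sub_right] using hlt

theorem inner_sub_neg_of_mem_convexHull_normalCone {S : Set F} {y z w : F}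
    (hw : w ∈ convexHull ℝ (normalCone S y \ {0})) (hz : z ∈ interior S) : ⟪w, z - y⟫ < 0 := by
  have hconv : Convex ℝ {u : F | ⟪u, z - y⟫ < 0} :=
    convex_halfSpace_lt ((innerₗ F).flip (z - y)).isLinear 0
  exact convexHull_min (fun u hu ↦ inner_sub_neg_of_mem_normalCone hu.1 hu.2 hz) hconv hw

end NormalCone

section ProjectedSolution

/-- `x` is a projected solution of the quasi-variational inequality `QVI(T, K)` over `X`: some
`y ∈ K x` has `x` as a nearest point in `X` and solves the variational inequality for `T` on
`K x`. -/
def IsProjectedQVISolution {F : Type*} [NormedAddCommGroup F] [InnerProductSpace ℝ F]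
    (X : Set F) (T K : F → Set F) (x : F) : Prop :=
  x ∈ X ∧ ∃ y ∈ K x, ‖y - x‖ = ⨅ w : X, ‖y - (w : F)‖ ∧ ∃ v ∈ T y, ∀ z ∈ K x, 0 ≤ ⟪v, z - y⟫

variable {ι : Type*} [Fintype ι] {E : ι → Type*} [∀ i, NormedAddCommGroup (E i)]

/-- `x` is a projected solution of the generalized Nash game with joint choice set `X`, constraint
maps `K i` and preference maps `P i`. -/
def IsProjectedGNEPSolution (X : Set (PiLp 2 E)) (K P : ∀ i, PiLp 2 E → Set (E i))
    (x : PiLp 2 E) : Prop :=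
  x ∈ X ∧ ∃ y : PiLp 2 E, ‖y - x‖ = ⨅ w : X, ‖y - (w : PiLp 2 E)‖ ∧
    ∀ i, y i ∈ K i x ∧ P i y ∩ K i x = ∅

variable [∀ i, InnerProductSpace ℝ (E i)]

/-- The map `T` of the quasi-variational inequality associated with the preference maps `P i`: the
product of the convex hulls of the unit normals to `co (P i y)` at `y i`. -/
def preferenceNormalMap (P : ∀ i, PiLp 2 E → Set (E i)) (y : PiLp 2 E) : Set (PiLp 2 E) :=
  {v | ∀ i, v i ∈ convexHull ℝ (normalCone (convexHull ℝ (P i y)) (y i) ∩ Metric.sphere 0 1)}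

theorem inner_piLp_single_right [DecidableEq ι] (v : PiLp 2 E) (i : ι) (a : E i) :
    ⟪v, PiLp.single 2 i a⟫ = ⟪v i, a⟫ := by
  rw [PiLp.inner_apply, Fintype.sum_eq_single i fun j hj ↦ by simp [hj], PiLp.single_eq_same]

theorem inner_apply_sub_nonneg_of_forall_mem_pi {C : ∀ i, Set (E i)} {y v : PiLp 2 E}
    (hy : ∀ i, y i ∈ C i) (hv : ∀ z : PiLp 2 E, (∀ i, z i ∈ C i) → 0 ≤ ⟪v, z - y⟫)
    (i : ι) {a : E i} (ha : a ∈ C i) : 0 ≤ ⟪v i, a - y i⟫ := by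
  classical
  have hdev : ∀ j, (y + PiLp.single 2 i (a - y i)) j ∈ C j := fun j ↦ by
    rcases eq_or_ne j i with rfl | hj
    · simpa using ha
    · simpa [hj] using hy j
  simpa only [add_sub_cancel_left, inner_piLp_single_right] using hv _ hdev

theorem disjoint_interior_convexHull_of_variationalInequality {C : ∀ i, Set (E i)}
    {P : ∀ i, PiLp 2 E → Set (E i)} {y v : PiLp 2 E} (hy : ∀ i, y i ∈ C i)
    (hvT : v ∈ preferenceNormalMap P y)
    (hv : ∀ z : PiLp 2 E, (∀ i, z i ∈ C i) → 0 ≤ ⟪v, z - y⟫) (i : ι) :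
    Disjoint (interior (convexHull ℝ (P i y))) (C i) := by
  refine Set.disjoint_left.2 fun a haP haC ↦ ?_
  have hunit : v i ∈ convexHull ℝ (normalCone (convexHull ℝ (P i y)) (y i) \ {0}) :=
    convexHull_mono
      (Set.inter_subset_inter_right _ fun _ hw ↦ ne_zero_of_mem_unit_sphere ⟨_, hw⟩) (hvT i)
  exact (inner_sub_neg_of_mem_convexHull_normalCone hunit haP).not_ge
    (inner_apply_sub_nonneg_of_forall_mem_pi hy hv i haC)

theorem projected_QVI_solution_is_projected_GNEP_solution_general {X : Set (PiLp 2 E)}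
    {K P : ∀ i, PiLp 2 E → Set (E i)} {x : PiLp 2 E}
    (hP : ∀ i, ∀ y : PiLp 2 E, (∀ j, y j ∈ K j x) → IsOpen (P i y))
    (hx : IsProjectedQVISolution X (preferenceNormalMap P) (fun x ↦ {y | ∀ i, y i ∈ K i x}) x) :
    IsProjectedGNEPSolution X K P x := by
  obtain ⟨hxX, y, hyK, hproj, v, hvT, hv⟩ := hx
  refine ⟨hxX, y, hproj, fun i ↦ ⟨hyK i, Set.disjoint_iff_inter_eq_empty.1 ?_⟩⟩
  have hPint : P i y ⊆ interior (convexHull ℝ (P i y)) :=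
    (hP i y hyK).subset_interior_iff.2 (subset_convexHull ℝ _)
  exact (disjoint_interior_convexHull_of_variationalInequality hyK hvT hv i).mono_left hPint

end ProjectedSolution

/-- Under (a) each `X_i` nonempty convex closed, (b) each `K_i`
nonempty-valued on `X`, (c) each `P_i(y)` open for `y ∈ ∏_i co(cl(K_i(X)))`,
every projected solution of `QVI(T,K)` is a projected solution of the
generalized Nash game `Γ = (X_i, K_i, P_i)_i`. -/
theorem projected_QVI_solution_is_projected_GNEP_solution
    (N : ℕ) (hN : 1 ≤ N) (d : Fin N → ℕ)
    (Xi : ∀ i : Fin N, Set (Vec (d i)))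
    (Ki : ∀ i : Fin N, Strat N d → Set (Vec (d i)))
    (P : ∀ i : Fin N, Strat N d → Set (Vec (d i)))
    -- the joint choice set `X = ∏ X_i`
    (X : Set (Strat N d)) (hX : X = {x : Strat N d | ∀ i, x i ∈ Xi i})
    -- the set `∏_i co(cl(K_i(X)))`
    (Q : Set (Strat N d))
    (hQ : Q = {y : Strat N d | ∀ i, y i ∈ convexHull ℝ (closure (⋃ x ∈ X, Ki i x))})
    -- the joint constraint map `K(x) = ∏ K_i(x)`
    (K : Strat N d → Set (Strat N d))
    (hK : ∀ x : Strat N d, K x = {y : Strat N d | ∀ i, y i ∈ Ki i x})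
    -- the map `T(y) = ∏_i co((co(P_i(y)) − {y_i})° ∩ S_i)`
    (T : Strat N d → Set (Strat N d))
    (hT : ∀ y : Strat N d, T y = {v : Strat N d | ∀ i : Fin N,
      v i ∈ convexHull ℝ
        ({w : Vec (d i) | ∀ z ∈ convexHull ℝ (P i y), ⟪w, z - y i⟫ ≤ 0}
          ∩ Metric.sphere (0 : Vec (d i)) 1)})
    -- hypotheses (a), (b), (c)
    (ha : ∀ i, (Xi i).Nonempty ∧ Convex ℝ (Xi i) ∧ IsClosed (Xi i))
    (hb : ∀ i, ∀ x ∈ X, (Ki i x).Nonempty)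
    (hc : ∀ i, ∀ y ∈ Q, IsOpen (P i y))
    -- `x̃` is a projected solution of `QVI(T,K)`
    (xt : Strat N d) (hxt : xt ∈ X)
    (hQVI : ∃ yt ∈ K xt,
      (‖yt - xt‖ = ⨅ w : X, ‖yt - (w : Strat N d)‖) ∧
      ∃ ys ∈ T yt, ∀ z ∈ K xt, ⟪ys, z - yt⟫ ≥ 0) :
    -- `x̃` is a projected solution of the GNEP `Γ`
    ∃ yt : Strat N d,
      (‖yt - xt‖ = ⨅ w : X, ‖yt - (w : Strat N d)‖) ∧
      ∀ i : Fin N, yt i ∈ Ki i xt ∧ P i yt ∩ Ki i xt = ∅ := by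
  obtain ⟨rfl, rfl⟩ : K = _ ∧ T = preferenceNormalMap P := ⟨funext hK, funext hT⟩
  have hP : ∀ i, ∀ y : Strat N d, (∀ j, y j ∈ Ki j xt) → IsOpen (P i y) := fun i y hy ↦
    hc i y (hQ ▸ fun j ↦ subset_convexHull ℝ _ (subset_closure (Set.mem_biUnion hxt (hy j))))
  exact (projected_QVI_solution_is_projected_GNEP_solution_general hP ⟨hxt, hQVI⟩).2
end

section
/- Assume for each player i: (a) X_i ⊆ ℝ^{n_i} is nonempty, convex and closed; (b) K_i : X ⇉ ℝ^{n_i} has nonempty values; (c) P_i(y) is an open subset of ℝ^{n_i} for every y ∈ ∏_i co(cl(K_i(X))). Suppose x̃ ∈ X and ỹ ∈ K(x̃) = ∏_i K_i(x̃) are such that there exists ỹ* ∈ T(ỹ), with T(y) = ∏_i co(((co(P_i(y)) − {y_i})°) ∩ S_i) and S_i the unit sphere of ℝ^{n_i}, satisfying ⟨x̃ − ỹ, η − x̃⟩ + ⟨ỹ*, z − ỹ⟩ ≥ 0 for all η ∈ X and all z ∈ K(x̃). Then x̃ is a projected solution of the generalized Nash game Γ = (X_i,K_i,P_i)_i. 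-/
open scoped RealInnerProductSpace

/-!
Taking `z = ỹ` in the variational inequality makes `x̃` a nearest point of `X` to `ỹ`. Taking
`η = x̃` and varying one coordinate of `z` gives `⟨ỹ*_i, p - ỹ_i⟩ ≥ 0` for all `p ∈ K_i(x̃)`.
But a nonzero functional that is `≤ 0` on `C - ỹ_i`, with `C = co(P_i(ỹ))`, is `< 0` on the interior
of `C - ỹ_i`, because nonzero functionals are open maps; strict negativity at a point survives
convex combinations of functionals, so `⟨ỹ*_i, p - ỹ_i⟩ < 0` for all `p ∈ P_i(ỹ)`. Restricting to
the unit sphere before taking the convex hull is what excludes the zero functional, which lies in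
every polar cone.
-/

section InnerProductSpace

variable {E : Type*} [NormedAddCommGroup E] [InnerProductSpace ℝ E]

/-- The convex hull of the unit normals to `C` at `y`, that is, of the part of the polar cone of
`C - y` on the unit sphere. One factor of `T(y)` is obtained for `C = co(P_i(y))`. -/
def unitNormalHull (C : Set E) (y : E) : Set E :=
  convexHull ℝ ({w : E | ∀ z ∈ C, ⟪w, z - y⟫ ≤ 0} ∩ Metric.sphere (0 : E) 1)

theorem inner_neg_of_mem_interior {C : Set E} {w y p : E} (hw : w ≠ 0)
    (hC : ∀ z ∈ C, ⟪w, z - y⟫ ≤ 0) (hp : p ∈ interior C) : ⟪w, p - y⟫ < 0 := by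
  have hopen : IsOpenMap (innerSL ℝ w) :=
    (innerSL ℝ w).isOpenMap_of_ne_zero fun h ↦ hw <| by simpa using DFunLike.congr_fun h w
  have himage : innerSL ℝ w '' C ⊆ Set.Iic ⟪w, y⟫ := by
    rintro _ ⟨z, hz, rfl⟩
    simpa [inner_sub_right] using hC z hz
  have hlt : ⟪w, p⟫ ∈ interior (Set.Iic ⟪w, y⟫) :=
    interior_mono himage (hopen.image_interior_subset C ⟨p, hp, rfl⟩)
  rw [interior_Iic, Set.mem_Iio] at hlt
  rwa [inner_sub_right, sub_neg]

theorem inner_neg_of_mem_unitNormalHull {C : Set E} {v y p : E} (hv : v ∈ unitNormalHull C y)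
    (hp : p ∈ interior C) : ⟪v, p - y⟫ < 0 := by
  have hconvex : Convex ℝ {w : E | ⟪w, p - y⟫ < 0} :=
    convex_halfSpace_lt ((innerₗ E).flip (p - y)).isLinear 0
  refine convexHull_min ?_ hconvex hv
  rintro w ⟨hw, hw1⟩
  exact inner_neg_of_mem_interior (ne_zero_of_mem_unit_sphere ⟨w, hw1⟩) hw hp

theorem norm_sub_le_norm_sub_of_inner_nonneg {x y w : E} (h : 0 ≤ ⟪x - y, w - x⟫) :
    ‖y - x‖ ≤ ‖y - w‖ := by
  have hsq : ‖w - y‖ ^ 2 = ‖x - y‖ ^ 2 + 2 * ⟪x - y, w - x⟫ + ‖w - x‖ ^ 2 := by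
    rw [← norm_add_sq_real, add_comm, sub_add_sub_cancel]
  rw [norm_sub_rev y x, norm_sub_rev y w]
  exact le_of_sq_le_sq (by linarith [sq_nonneg ‖w - x‖]) (norm_nonneg _)

theorem norm_sub_eq_iInf_of_inner_nonneg {X : Set E} {x y : E} (hx : x ∈ X)
    (h : ∀ w ∈ X, 0 ≤ ⟪x - y, w - x⟫) : ‖y - x‖ = ⨅ w : X, ‖y - (w : E)‖ := by
  have : Nonempty X := ⟨⟨x, hx⟩⟩
  have hbdd : BddBelow (Set.range fun w : X ↦ ‖y - (w : E)‖) :=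
    ⟨0, Set.forall_mem_range.2 fun _ ↦ norm_nonneg _⟩
  exact le_antisymm (le_ciInf fun w ↦ norm_sub_le_norm_sub_of_inner_nonneg (h w w.2))
    (ciInf_le hbdd ⟨x, hx⟩)

end InnerProductSpace

theorem inner_toLp_update_sub {𝕜 ι : Type*} [RCLike 𝕜] [Fintype ι] [DecidableEq ι] {E : ι → Type*}
    [∀ i, NormedAddCommGroup (E i)] [∀ i, InnerProductSpace 𝕜 (E i)] (v y : PiLp 2 E) (i : ι)
    (p : E i) :
    inner 𝕜 v (WithLp.toLp 2 (Function.update (fun j ↦ y j) i p) - y) =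
      inner 𝕜 (v i) (p - y i) := by
  rw [PiLp.inner_apply, Fintype.sum_eq_single i fun j hj ↦ by simp [hj]]
  simp

section Game

variable {ι : Type*} [Fintype ι] {E : ι → Type*} [∀ i, NormedAddCommGroup (E i)]
  [∀ i, InnerProductSpace ℝ (E i)]

/-- `x` is a projected solution of the generalized Nash game with joint choice set `X`, constraint
maps `K i` and preference maps `P i`; the condition `x ∈ X` is left to the context. -/
def IsProjectedSolution (X : Set (PiLp 2 E)) (K P : ∀ i, PiLp 2 E → Set (E i))
    (x : PiLp 2 E) : Prop :=
  ∃ y : PiLp 2 E, ‖y - x‖ = ⨅ w : X, ‖y - (w : PiLp 2 E)‖ ∧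
    ∀ i, y i ∈ K i x ∧ P i y ∩ K i x = ∅

theorem inner_coord_nonneg_of_forall_mem_pi {S : ∀ i, Set (E i)} {v y : PiLp 2 E}
    (hy : ∀ i, y i ∈ S i) (h : ∀ z : PiLp 2 E, (∀ i, z i ∈ S i) → 0 ≤ ⟪v, z - y⟫)
    {i : ι} {p : E i} (hp : p ∈ S i) : 0 ≤ ⟪v i, p - y i⟫ := by
  classical
  rw [← inner_toLp_update_sub]
  exact h _ <| (Function.forall_update_iff _ fun j q ↦ q ∈ S j).2 ⟨hp, fun j _ ↦ hy j⟩

theorem projected_GNEP_solution_of_combined_QVI_general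
    {X : Set (PiLp 2 E)} {K P : ∀ i, PiLp 2 E → Set (E i)} {x y v : PiLp 2 E}
    (hP : ∀ i, IsOpen (convexHull ℝ (P i y))) (hx : x ∈ X) (hy : ∀ i, y i ∈ K i x)
    (hv : ∀ i, v i ∈ unitNormalHull (convexHull ℝ (P i y)) (y i))
    (hVI : ∀ η ∈ X, ∀ z : PiLp 2 E, (∀ i, z i ∈ K i x) → 0 ≤ ⟪x - y, η - x⟫ + ⟪v, z - y⟫) :
    IsProjectedSolution X K P x := by
  have hproj : ∀ η ∈ X, 0 ≤ ⟪x - y, η - x⟫ := fun η hη ↦ by simpa using hVI η hη y hy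
  have hresp : ∀ z : PiLp 2 E, (∀ i, z i ∈ K i x) → 0 ≤ ⟪v, z - y⟫ := fun z hz ↦ by
    simpa using hVI x hx z hz
  refine ⟨y, norm_sub_eq_iInf_of_inner_nonneg hx hproj, fun i ↦ ⟨hy i, ?_⟩⟩
  refine Set.eq_empty_of_forall_notMem fun p ⟨hpP, hpK⟩ ↦ ?_
  have hp : p ∈ interior (convexHull ℝ (P i y)) := by
    rw [(hP i).interior_eq]
    exact subset_convexHull ℝ _ hpP
  exact (inner_neg_of_mem_unitNormalHull (hv i) hp).not_ge
    (inner_coord_nonneg_of_forall_mem_pi hy hresp hpK)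

end Game

/-- Under (a) each `X_i` nonempty convex closed, (b) each `K_i`
nonempty-valued on `X`, (c) each `P_i(y)` open for `y ∈ ∏_i co(cl(K_i(X)))`: if
`x̃ ∈ X`, `ỹ ∈ K(x̃)` and some `ỹ* ∈ T(ỹ)` satisfy
`⟨x̃ − ỹ, η − x̃⟩ + ⟨ỹ*, z − ỹ⟩ ≥ 0` for all `η ∈ X`, `z ∈ K(x̃)`, then `x̃` is a
projected solution of the generalized Nash game `Γ = (X_i, K_i, P_i)_i`. -/
theorem projected_GNEP_solution_of_combined_QVI
    (N : ℕ) (hN : 1 ≤ N) (d : Fin N → ℕ)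
    (Xi : ∀ i : Fin N, Set (Vec (d i)))
    (Ki : ∀ i : Fin N, Strat N d → Set (Vec (d i)))
    (P : ∀ i : Fin N, Strat N d → Set (Vec (d i)))
    -- the joint choice set `X = ∏ X_i`
    (X : Set (Strat N d)) (hX : X = {x : Strat N d | ∀ i, x i ∈ Xi i})
    -- the set `∏_i co(cl(K_i(X)))`
    (Q : Set (Strat N d))
    (hQ : Q = {y : Strat N d | ∀ i, y i ∈ convexHull ℝ (closure (⋃ x ∈ X, Ki i x))})
    -- the joint constraint map `K(x) = ∏ K_i(x)`
    (K : Strat N d → Set (Strat N d))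
    (hK : ∀ x : Strat N d, K x = {y : Strat N d | ∀ i, y i ∈ Ki i x})
    -- the map `T(y) = ∏_i co((co(P_i(y)) − {y_i})° ∩ S_i)`
    (T : Strat N d → Set (Strat N d))
    (hT : ∀ y : Strat N d, T y = {v : Strat N d | ∀ i : Fin N,
      v i ∈ convexHull ℝ
        ({w : Vec (d i) | ∀ z ∈ convexHull ℝ (P i y), ⟪w, z - y i⟫ ≤ 0}
          ∩ Metric.sphere (0 : Vec (d i)) 1)})
    -- hypotheses (a), (b), (c)
    (ha : ∀ i, (Xi i).Nonempty ∧ Convex ℝ (Xi i) ∧ IsClosed (Xi i))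
    (hb : ∀ i, ∀ x ∈ X, (Ki i x).Nonempty)
    (hc : ∀ i, ∀ y ∈ Q, IsOpen (P i y))
    -- the combined quasi-variational inequality
    (xt : Strat N d) (hxt : xt ∈ X)
    (yt : Strat N d) (hyt : yt ∈ K xt)
    (ys : Strat N d) (hys : ys ∈ T yt)
    (hineq : ∀ η ∈ X, ∀ z ∈ K xt, ⟪xt - yt, η - xt⟫ + ⟪ys, z - yt⟫ ≥ 0) :
    -- `x̃` is a projected solution of the GNEP `Γ`
    ∃ y : Strat N d,
      (‖y - xt‖ = ⨅ w : X, ‖y - (w : Strat N d)‖) ∧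
      ∀ i : Fin N, y i ∈ Ki i xt ∧ P i y ∩ Ki i xt = ∅ := by
  subst hQ
  simp only [hK, hT, Set.mem_ofPred_eq] at hyt hys hineq
  have hopen : ∀ i, IsOpen (P i yt) := fun i ↦ hc i yt fun j ↦
    subset_convexHull ℝ _ (subset_closure (Set.mem_biUnion hxt (hyt j)))
  exact projected_GNEP_solution_of_combined_QVI_general (fun i ↦ (hopen i).convexHull) hxt hyt hys
    hineq
end

section
/- Assume for each player i: (a) X_i ⊆ ℝ^{n_i} is nonempty, closed and convex; (b) K_i : X ⇉ ℝ^{n_i} is a closed and lower semicontinuous set-valued map with nonempty convex values; (c) P_i : ℝ^n ⇉ ℝ^{n_i} has open graph, i.e. {(x,y_i) ∈ ℝ^n × ℝ^{n_i} : y_i ∈ P_i(x)} is open; (d) x_i ∉ co(P_i(x)) for every x ∈ ∏_i co(cl(K_i(X))). If, in addition, each K_i(X) = ⋃_{x∈X} K_i(x) is relatively compact, then the generalized Nash game Γ = (X_i,K_i,P_i)_i admits a projected solution (no boundedness of the choice sets X_i is assumed). -/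
open scoped RealInnerProductSpace

/-- Lower semicontinuity of a set-valued map `F` on a set `A`. -/
def LscOn {α β : Type*} [TopologicalSpace α] [TopologicalSpace β]
    (F : α → Set β) (A : Set α) : Prop :=
  ∀ a ∈ A, ∀ V : Set β, IsOpen V → (F a ∩ V).Nonempty →
    ∃ U : Set α, IsOpen U ∧ a ∈ U ∧ ∀ a' ∈ U ∩ A, (F a' ∩ V).Nonempty

/-!
Let `p` be the metric projection onto `X`. A generalized Nash equilibrium `y` of the game with
constraint maps `K i ∘ p`, which are defined on the whole space and have relatively compact range,
makes `p y` a projected solution; hence `X` need not be bounded.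

To find `y`, give player `i` the payoff `u i (y, z)`, the distance from `(y, z)` to the complement
of the graph of `P i`. The best responses over `K i (p y)` have a closed graph, and they lie in
`P i y` as soon as `P i y` meets `K i (p y)`. Kakutani's theorem yields a `y` whose components lie
in the closed convex hulls of the best responses to `y`. If `P i y` met `K i (p y)`, then `y i`
would lie in the convex hull of `P i y`, which irreflexivity excludes.

Kakutani's theorem is reduced to Brouwer's theorem for `C¹` maps by a partition of unity, and the
latter to a volume computation: if `f` is `C¹` and fixes the frontier of a compact `S`, then the
integral over `S` of the Jacobian of `id + t (f - id)` is a polynomial in `t`, equal to the volume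
of `S` for small `t` because the map is then a bijection of `S`, hence equal to it at `t = 1`. A
retraction onto a sphere, however, has vanishing Jacobian.
-/

section Brouwer

open Set Filter Topology MeasureTheory Polynomial Function

lemma exists_polynomial_eval_eq_integral {α : Type*} [MeasurableSpace α] {μ : Measure α} {n : ℕ}
    {p : α → ℝ[X]} (hdeg : ∀ x, (p x).natDegree ≤ n)
    (hint : ∀ t, Integrable (fun x => (p x).eval t) μ) :
    ∃ q : ℝ[X], ∀ t, q.eval t = ∫ x, (p x).eval t ∂μ := by
  have hinj : InjOn (Nat.cast : ℕ → ℝ) (Finset.range (n + 1)) := Nat.cast_injective.injOn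
  refine ⟨Lagrange.interpolate (Finset.range (n + 1)) Nat.cast
    fun k => ∫ x, (p x).eval (k : ℝ) ∂μ, fun t => ?_⟩
  have hp (x : α) : (p x).eval t = ∑ k ∈ Finset.range (n + 1),
      (p x).eval (k : ℝ) * (Lagrange.basis (Finset.range (n + 1)) Nat.cast k).eval t := by
    have hlt : (p x).degree < (Finset.range (n + 1)).card := by
      rw [Finset.card_range]
      exact degree_le_natDegree.trans_lt (by exact_mod_cast Nat.lt_succ_of_le (hdeg x))
    conv_lhs => rw [Lagrange.eq_interpolate hinj hlt]
    simp only [Lagrange.interpolate_apply, eval_finsetSum, eval_mul, eval_C]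
  simp_rw [hp]
  rw [integral_finsetSum _ fun (k : ℕ) _ => (hint k).mul_const _]
  simp only [integral_mul_const, Lagrange.interpolate_apply, eval_finsetSum, eval_mul, eval_C]

lemma exists_polynomial_eval_eq_det_id_add_smul {R M : Type*} [CommRing R] [Nontrivial R]
    [AddCommGroup M] [Module R M] [Module.Free R M] [Module.Finite R M] (A : M →ₗ[R] M) :
    ∃ p : R[X], p.natDegree ≤ Module.finrank R M ∧
      ∀ t, p.eval t = LinearMap.det (LinearMap.id + t • A) := by
  let b := Module.Free.chooseBasis R M
  let T := LinearMap.toMatrix b b A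
  refine ⟨((X : R[X]) • T.map C + (1 : Matrix _ _ R).map C).det, ?_, fun t => ?_⟩
  · rw [Module.finrank_eq_card_chooseBasisIndex]
    exact natDegree_det_X_add_C_le T 1
  · rw [← LinearMap.det_toMatrix b, map_add, map_smul, LinearMap.toMatrix_id, ← coe_evalRingHom,
      RingHom.map_det]
    congr 1
    ext i j
    simp [T, Matrix.one_apply, apply_ite, add_comm, mul_comm t]

lemma inter_frontier_nonempty_of_isPreconnected {α : Type*} [TopologicalSpace α] {s t : Set α}
    (ht : IsPreconnected t) (hs : (t ∩ s).Nonempty) (hsc : (t ∩ sᶜ).Nonempty) :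
    (t ∩ frontier s).Nonempty := by
  by_contra hempty
  obtain ⟨x, hxt, hxs⟩ := hs
  obtain ⟨y, hyt, hys⟩ := hsc
  have hfrontier : ∀ z ∈ t, z ∉ frontier s := fun z hz hzs => hempty ⟨z, hz, hzs⟩
  have hmem (z : α) (hz : z ∈ t) : z ∈ interior s ∨ z ∈ (closure s)ᶜ := by
    by_contra! hz'
    exact hfrontier z hz ⟨not_not.1 hz'.2, hz'.1⟩
  obtain ⟨z, -, hzi, hzc⟩ := ht _ _ isOpen_interior isClosed_closure.isOpen_compl hmem
    ⟨x, hxt, (hmem x hxt).resolve_right (not_not.2 (subset_closure hxs))⟩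
    ⟨y, hyt, (hmem y hyt).resolve_left fun h => hys (interior_subset h)⟩
  exact hzc (interior_subset_closure hzi)

lemma lipschitzWith_indicator_of_eq_zero_on_frontier {E β : Type*} [NormedAddCommGroup E]
    [NormedSpace ℝ E] [PseudoMetricSpace β] [Zero β] {S : Set E} {h : E → β} {L : NNReal}
    (hS : IsClosed S) (hL : LipschitzOnWith L h S) (h0 : ∀ x ∈ frontier S, h x = 0) :
    LipschitzWith L (S.indicator h) := by
  have dist_zero_le {x y : E} (hx : x ∈ S) (hy : y ∉ S) : dist (h x) 0 ≤ L * dist x y := by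
    obtain ⟨z, hz, hzS⟩ := inter_frontier_nonempty_of_isPreconnected
      (convex_segment x y).isPreconnected
      ⟨x, left_mem_segment ℝ x y, hx⟩ ⟨y, right_mem_segment ℝ x y, hy⟩
    calc dist (h x) 0 = dist (h x) (h z) := by rw [h0 z hzS]
      _ ≤ L * dist x z := hL.dist_le_mul x hx z (hS.frontier_subset hzS)
      _ ≤ L * dist x y := by
        gcongr
        linarith [dist_add_dist_of_mem_segment hz, dist_nonneg (x := z) (y := y)]
  refine LipschitzWith.of_dist_le_mul fun x y => ?_
  by_cases hx : x ∈ S <;> by_cases hy : y ∈ S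
  · simpa only [indicator_of_mem, hx, hy] using hL.dist_le_mul x hx y hy
  · simpa only [indicator_of_mem hx, indicator_of_notMem hy] using dist_zero_le hx hy
  · simpa only [indicator_of_notMem hx, indicator_of_mem hy, dist_comm] using dist_zero_le hy hx
  · simp only [indicator_of_notMem hx, indicator_of_notMem hy, dist_self]
    positivity

lemma bijective_add_of_contractingWith {E : Type*} [NormedAddCommGroup E] [CompleteSpace E]
    {c : NNReal} {h : E → E} (hh : ContractingWith c h) : Bijective fun x => x + h x := by
  refine (bijective_iff_existsUnique _).2 fun y => ?_
  have hy : ContractingWith c fun x => y - h x :=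
    ⟨hh.1, LipschitzWith.of_dist_le_mul fun x x' => by
      simpa only [dist_sub_left] using hh.2.dist_le_mul x x'⟩
  exact ⟨hy.fixedPoint, (sub_eq_iff_eq_add.1 hy.fixedPoint_isFixedPt).symm,
    fun x hx => hy.fixedPoint_unique (sub_eq_iff_eq_add.2 hx.symm)⟩

section ChangeOfVariables

variable {E : Type*} [NormedAddCommGroup E] [NormedSpace ℝ E] [FiniteDimensional ℝ E]
  {S : Set E} {h : E → E}

lemma eventually_bijOn_add_smul_of_eq_zero_on_frontier (hS : IsCompact S) (hh : ContDiff ℝ 1 h)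
    (h0 : ∀ x ∈ frontier S, h x = 0) :
    ∀ᶠ t : ℝ in 𝓝 0, BijOn (fun x => x + t • h x) S S := by
  obtain ⟨L, hL⟩ :=
    hh.locallyLipschitz.locallyLipschitzOn.exists_lipschitzOnWith_of_compact hS
  -- Cutting `h` off outside `S` keeps it Lipschitz and makes the perturbed map globally bijective;
  -- as it fixes every point of `Sᶜ`, it then permutes `S`.
  have hlip := lipschitzWith_indicator_of_eq_zero_on_frontier hS.isClosed hL h0
  have hsmall : ∀ᶠ t : ℝ in 𝓝 0, ‖t‖₊ * L < 1 :=
    (by fun_prop : Continuous fun t : ℝ => ‖t‖₊ * L).continuousAt.eventually_lt_const (by simp)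
  filter_upwards [hsmall] with t ht
  have hbij : Bijective fun x => x + t • S.indicator h x :=
    bijective_add_of_contractingWith ⟨ht, (lipschitzWith_smul t).comp hlip⟩
  have hcompl : BijOn (fun x => x + t • S.indicator h x) Sᶜ Sᶜ :=
    (bijOn_id Sᶜ).congr fun x hx => by simp [indicator_of_notMem hx]
  have hS' : BijOn (fun x => x + t • S.indicator h x) S S := by
    simpa only [compl_compl] using hcompl.compl hbij
  exact hS'.congr fun x hx => by simp only [indicator_of_mem hx]

variable [MeasurableSpace E] [BorelSpace E] (μ : Measure E) [μ.IsAddHaarMeasure]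

lemma eventually_setIntegral_det_eq_measureReal (hS : IsCompact S) (hh : ContDiff ℝ 1 h)
    (h0 : ∀ x ∈ frontier S, h x = 0) :
    ∀ᶠ t : ℝ in 𝓝 0,
      ∫ x in S, (ContinuousLinearMap.id ℝ E + t • fderiv ℝ h x).det ∂μ = μ.real S := by
  have hdet : Continuous fun z : ℝ × E =>
      (ContinuousLinearMap.id ℝ E + z.1 • fderiv ℝ h z.2).det :=
    ContinuousLinearMap.continuous_det.comp <|
      continuous_const.add (continuous_fst.smul
        ((hh.continuous_fderiv one_ne_zero).comp continuous_snd))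
  have hpos : ∀ᶠ t : ℝ in 𝓝 0, ∀ x ∈ S,
      0 < (ContinuousLinearMap.id ℝ E + t • fderiv ℝ h x).det :=
    hS.eventually_forall_of_forall_eventually fun x _ =>
      hdet.continuousAt.eventually_const_lt (by simp [ContinuousLinearMap.det])
  filter_upwards [hpos, eventually_bijOn_add_smul_of_eq_zero_on_frontier hS hh h0] with t ht hbij
  have hderiv (x : E) : HasFDerivAt (fun x => x + t • h x)
      (ContinuousLinearMap.id ℝ E + t • fderiv ℝ h x) x :=
    (hasFDerivAt_id x).add (((hh.differentiable one_ne_zero x).hasFDerivAt).const_smul t)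
  calc ∫ x in S, (ContinuousLinearMap.id ℝ E + t • fderiv ℝ h x).det ∂μ
      = ∫ x in S, |(ContinuousLinearMap.id ℝ E + t • fderiv ℝ h x).det| • (1 : ℝ) ∂μ :=
        setIntegral_congr_fun hS.measurableSet fun x hx => by
          simp only [abs_of_pos (ht x hx), smul_eq_mul, mul_one]
    _ = ∫ _ in (fun x => x + t • h x) '' S, (1 : ℝ) ∂μ :=
        (integral_image_eq_integral_abs_det_fderiv_smul μ hS.measurableSet
          (fun x _ => (hderiv x).hasFDerivWithinAt) hbij.injOn fun _ => (1 : ℝ)).symm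
    _ = μ.real S := by rw [hbij.image_eq, setIntegral_const, smul_eq_mul, mul_one]

theorem setIntegral_det_fderiv_of_eq_id_on_frontier {f : E → E} (hS : IsCompact S)
    (hf : ContDiff ℝ 1 f) (hid : ∀ x ∈ frontier S, f x = x) :
    ∫ x in S, (fderiv ℝ f x).det ∂μ = μ.real S := by
  set h : E → E := fun x => f x - x with h_def
  have hh : ContDiff ℝ 1 h := hf.sub contDiff_id
  choose p hdeg hp using fun x =>
    exists_polynomial_eval_eq_det_id_add_smul (fderiv ℝ h x : E →ₗ[ℝ] E)
  have hcont (t : ℝ) : Continuous fun x => (p x).eval t := by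
    have hdet : Continuous fun x => (ContinuousLinearMap.id ℝ E + t • fderiv ℝ h x).det :=
      ContinuousLinearMap.continuous_det.comp <|
        continuous_const.add ((hh.continuous_fderiv one_ne_zero).const_smul t)
    exact hdet.congr fun x => (hp x t).symm
  obtain ⟨q, hq⟩ := exists_polynomial_eval_eq_integral (μ := μ.restrict S) hdeg
    fun t => (hcont t).continuousOn.integrableOn_compact hS
  have hev : ∀ᶠ t : ℝ in 𝓝 0, q.eval t = (C (μ.real S)).eval t := by
    filter_upwards [eventually_setIntegral_det_eq_measureReal μ hS hh
      fun x hx => by simp [h_def, hid x hx]] with t ht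
    rw [hq, eval_C, ← ht]
    simp_rw [hp]
    rfl
  have hqC : q = C (μ.real S) := eq_of_infinite_eval_eq _ _ (infinite_of_mem_nhds 0 hev)
  have hderiv (x : E) : fderiv ℝ h x = fderiv ℝ f x - ContinuousLinearMap.id ℝ E :=
    ((hf.differentiable one_ne_zero x).hasFDerivAt.sub (hasFDerivAt_id x)).fderiv
  calc ∫ x in S, (fderiv ℝ f x).det ∂μ = q.eval 1 := by
        rw [hq]
        simp_rw [hp, hderiv]
        simp [ContinuousLinearMap.det]
    _ = μ.real S := by rw [hqC, eval_C]

end ChangeOfVariables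

section InnerProduct

variable {E : Type*} [NormedAddCommGroup E] [InnerProductSpace ℝ E]

lemma inner_apply_fderiv_eq_zero_of_norm_eq_const {F : Type*} [NormedAddCommGroup F]
    [NormedSpace ℝ F] {r : F → E} {f' : F →L[ℝ] E} {ρ : ℝ} {x : F} (hr : HasFDerivAt r f' x)
    (hρ : ∀ x, ‖r x‖ = ρ) (v : F) : ⟪r x, f' v⟫ = 0 := by
  have hconst : HasFDerivAt (fun y => ‖r y‖ ^ 2) (0 : F →L[ℝ] ℝ) x := by
    simpa only [hρ] using hasFDerivAt_const (ρ ^ 2) x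
  simpa using DFunLike.congr_fun (hr.norm_sq.unique hconst) v

variable [FiniteDimensional ℝ E]

lemma det_fderiv_eq_zero_of_norm_eq_const {r : E → E} {ρ : ℝ} (hr : Differentiable ℝ r)
    (hρ : 0 < ρ) (hnorm : ∀ x, ‖r x‖ = ρ) (x : E) : (fderiv ℝ r x).det = 0 := by
  by_contra hdet
  obtain ⟨v, hv⟩ := (LinearMap.equivOfDetNeZero (fderiv ℝ r x : E →ₗ[ℝ] E) hdet).surjective (r x)
  have horth := inner_apply_fderiv_eq_zero_of_norm_eq_const (hr x).hasFDerivAt hnorm v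
  have hv : fderiv ℝ r x v = r x := hv
  rw [hv, real_inner_self_eq_norm_sq, hnorm] at horth
  exact (pow_pos hρ 2).ne' horth

theorem not_exists_contDiff_retraction_sphere {ρ : ℝ} (hρ : 0 < ρ) :
    ¬ ∃ r : E → E, ContDiff ℝ 1 r ∧ (∀ x, ‖r x‖ = ρ) ∧ ∀ x, ‖x‖ = ρ → r x = x := by
  rintro ⟨r, hr, hnorm, hid⟩
  borelize E
  let μ : Measure E := Measure.addHaar
  have hvol := setIntegral_det_fderiv_of_eq_id_on_frontier μ (isCompact_closedBall (0 : E) ρ) hr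
    fun x hx => hid x (by simpa using Metric.frontier_closedBall_subset_sphere hx)
  simp only [det_fderiv_eq_zero_of_norm_eq_const (hr.differentiable one_ne_zero) hρ hnorm,
    integral_zero] at hvol
  exact (ENNReal.toReal_pos (Metric.measure_closedBall_pos μ 0 hρ).ne'
    (isCompact_closedBall 0 ρ).measure_ne_top).ne hvol

lemma exists_isFixedPt_of_contDiff_of_norm_le {g : E → E} {R : ℝ} (hg : ContDiff ℝ 1 g)
    (hR : ∀ x, ‖g x‖ ≤ R) : ∃ x, IsFixedPt g x := by
  by_contra! hfix
  have hR0 : 0 ≤ R := (norm_nonneg _).trans (hR 0)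
  let χ : ContDiffBump (0 : E) := ⟨R + 1, R + 2, by linarith, by linarith⟩
  -- `v` vanishes only at fixed points of `g` and equals `id` on the sphere of radius `R + 2`.
  let v : E → E := fun x => x - χ x • g x
  have hv : ContDiff ℝ 1 v := contDiff_id.sub (χ.contDiff.smul hg)
  have hv0 (x : E) : v x ≠ 0 := by
    intro hx
    have hx : x = χ x • g x := sub_eq_zero.1 hx
    have hxR : ‖x‖ ≤ R := calc
      ‖x‖ = χ x * ‖g x‖ := by rw [← Real.norm_of_nonneg χ.nonneg, ← norm_smul, ← hx]
      _ ≤ 1 * R := mul_le_mul χ.le_one (hR x) (norm_nonneg _) zero_le_one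
      _ = R := one_mul R
    have hχ : χ x = 1 := χ.one_of_mem_closedBall <| mem_closedBall_zero_iff.2 <|
      hxR.trans (lt_add_one R).le
    rw [hχ, one_smul] at hx
    exact hfix x hx.symm
  have hnorm0 (x : E) : ‖v x‖ ≠ 0 := norm_ne_zero_iff.2 (hv0 x)
  refine not_exists_contDiff_retraction_sphere (E := E) (ρ := R + 2) (by linarith)
    ⟨fun x => ((R + 2) / ‖v x‖) • v x, ?_, fun x => ?_, fun x hx => ?_⟩
  · exact (contDiff_const.div (hv.norm ℝ hv0) hnorm0).smul hv
  · rw [norm_smul, norm_div, norm_norm, div_mul_cancel₀ _ (hnorm0 x),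
      Real.norm_of_nonneg (by linarith)]
  · have hvx : v x = x := by
      simp [v, χ.zero_of_le_dist (x := x) (by simp [χ, hx])]
    simp only [hvx]
    rw [hx, div_self (by linarith), one_smul]

end InnerProduct

theorem exists_isFixedPt_of_contDiff_of_isBounded_range {E : Type*} [NormedAddCommGroup E]
    [NormedSpace ℝ E] [FiniteDimensional ℝ E] {g : E → E} (hg : ContDiff ℝ 1 g)
    (hb : Bornology.IsBounded (range g)) : ∃ x, IsFixedPt g x := by
  let e := toEuclidean (E := E)
  obtain ⟨R, hR⟩ := (e.lipschitz.isBounded_image hb).exists_norm_le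
  obtain ⟨y, hy⟩ := exists_isFixedPt_of_contDiff_of_norm_le (g := e ∘ g ∘ e.symm)
    (e.contDiff.comp (hg.comp e.symm.contDiff))
    fun x => hR _ (mem_image_of_mem e (mem_range_self _))
  exact ⟨e.symm y, e.eq_symm_apply.2 hy⟩

end Brouwer

section Kakutani

open Set Filter Topology
open scoped Manifold ContDiff

lemma upperHemicontinuous_of_isClosed_graph {α β : Type*} [TopologicalSpace α] [TopologicalSpace β]
    {F : α → Set β} {C : Set β} (hF : IsClosed {p : α × β | p.2 ∈ F p.1}) (hC : IsCompact C)
    (hFC : ∀ x, F x ⊆ C) : UpperHemicontinuous F := by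
  refine upperHemicontinuous_iff_forall_isOpen.2 fun x u hu hxu => ?_
  have hdisj : ∀ᶠ x' in 𝓝 x, ∀ y ∈ C \ u, y ∉ F x' :=
    (hC.diff hu).eventually_forall_of_forall_eventually fun y hy =>
      hF.isOpen_compl.mem_nhds fun hyF => hy.2 (hxu hyF)
  filter_upwards [hdisj] with x' hx' y hy
  by_contra hyu
  exact hx' y ⟨hFC x' hy, hyu⟩ hy

variable {E : Type*} [NormedAddCommGroup E] [NormedSpace ℝ E] [FiniteDimensional ℝ E]
  {F : E → Set E}

lemma exists_mem_convexHull_biUnion_ball (hne : ∀ x, (F x).Nonempty)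
    (hb : Bornology.IsBounded (⋃ x, F x)) {ε : ℝ} (hε : 0 < ε) :
    ∃ x, x ∈ convexHull ℝ (⋃ x' ∈ Metric.ball x ε, F x') := by
  obtain ⟨g, hg⟩ := exists_contMDiffMap_forall_mem_convex_of_local_const (n := 1) 𝓘(ℝ, E)
    (t := fun x => convexHull ℝ (⋃ x' ∈ Metric.ball x ε, F x')) (fun x => convex_convexHull ℝ _)
    fun x => by
      obtain ⟨c, hc⟩ := hne x
      refine ⟨c, ?_⟩
      filter_upwards [Metric.ball_mem_nhds x hε] with y hy
      exact subset_convexHull ℝ _ (mem_biUnion (Metric.mem_ball_comm.1 hy) hc)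
  have hrange : range g ⊆ convexHull ℝ (⋃ x, F x) := range_subset_iff.2 fun x =>
    convexHull_mono (iUnion₂_subset fun x' _ => subset_iUnion F x') (hg x)
  obtain ⟨x, hx⟩ := exists_isFixedPt_of_contDiff_of_isBounded_range g.contMDiff.contDiff
    ((isBounded_convexHull.2 hb).subset hrange)
  exact ⟨x, by simpa only [hx.eq] using hg x⟩

theorem exists_mem_closure_convexHull_of_upperHemicontinuous (hF : UpperHemicontinuous F)
    (hne : ∀ x, (F x).Nonempty) (hb : Bornology.IsBounded (⋃ x, F x)) :
    ∃ x, x ∈ closure (convexHull ℝ (F x)) := by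
  choose a ha using fun n : ℕ =>
    exists_mem_convexHull_biUnion_ball hne hb (Nat.one_div_pos_of_nat (α := ℝ) (n := n))
  obtain ⟨x, -, φ, hφ, hax⟩ := tendsto_subseq_of_bounded (isBounded_convexHull.2 hb)
    fun n => convexHull_mono (iUnion₂_subset fun x' _ => subset_iUnion F x') (ha n)
  refine ⟨x, ?_⟩
  rw [Metric.closure_eq_iInter_cthickening]
  refine mem_iInter₂.2 fun δ hδ => Metric.isClosed_cthickening.mem_of_tendsto hax ?_
  have hnear : ∀ᶠ y in 𝓝 x, F y ⊆ Metric.thickening δ (convexHull ℝ (F x)) :=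
    upperHemicontinuous_iff_forall_isOpen.1 hF x _ Metric.isOpen_thickening <|
      (subset_convexHull ℝ _).trans (Metric.self_subset_thickening hδ _)
  obtain ⟨r, hr, hball⟩ := Metric.eventually_nhds_iff_ball.1 hnear
  have hε : Tendsto (fun n => 1 / ((φ n : ℝ) + 1)) atTop (𝓝 0) :=
    tendsto_one_div_add_atTop_nhds_zero_nat.comp hφ.tendsto_atTop
  filter_upwards [hε.eventually_lt_const (half_pos hr),
    hax.eventually (Metric.ball_mem_nhds x (half_pos hr))] with n hn hnx
  refine Metric.thickening_subset_cthickening _ _ <|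
    convexHull_min (iUnion₂_subset fun y hy => hball y ?_)
      ((convex_convexHull ℝ _).thickening δ) (ha (φ n))
  calc dist y x ≤ dist y (a (φ n)) + dist (a (φ n)) x := dist_triangle _ _ _
    _ < r / 2 + r / 2 := add_lt_add (hy.trans hn) hnx
    _ = r := add_halves r

end Kakutani

section Equilibrium

open Set

lemma isClosed_setOf_forall_mem_of_lowerHemicontinuous {α β : Type*} [TopologicalSpace α]
    [TopologicalSpace β] {K : α → Set β} (hK : LowerHemicontinuous K) {C : Set (α × β)}
    (hC : IsClosed C) : IsClosed {x | ∀ y ∈ K x, (x, y) ∈ C} := by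
  have hbad : LowerHemicontinuous fun x => K x ∩ {y | (x, y) ∈ Cᶜ} :=
    hK.inter_hasOpenCGraph hC.isOpen_compl
  convert (lowerHemicontinuous_iff_isOpen_inter_nonempty.1 hbad univ isOpen_univ).isClosed_compl
    using 1
  ext x
  simp [Set.Nonempty]

/-- The best responses to `a`: the maximizers of the payoff `u (a, ·)` over the feasible set
`K a`. -/
def bestResponse {α β γ : Type*} [Preorder γ] (K : α → Set β) (u : α × β → γ) (a : α) : Set β :=
  {z ∈ K a | IsMaxOn (fun w => u (a, w)) (K a) z}

lemma bestResponse_subset {α β γ : Type*} [Preorder γ] {K : α → Set β} (u : α × β → γ) (a : α) :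
    bestResponse K u a ⊆ K a :=
  sep_subset _ _

section BestResponse

variable {α β γ : Type*} [TopologicalSpace α] [TopologicalSpace β] [TopologicalSpace γ]
  {K : α → Set β} {u : α × β → γ}

lemma bestResponse_nonempty [LinearOrder γ] [ClosedIciTopology γ] (hu : Continuous u) {a : α}
    (hne : (K a).Nonempty) (hK : IsCompact (K a)) : (bestResponse K u a).Nonempty :=
  hK.exists_isMaxOn hne (hu.comp (Continuous.prodMk_right a)).continuousOn

lemma isClosed_graph_bestResponse [Preorder γ] [OrderClosedTopology γ] (hu : Continuous u)
    (hgraph : IsClosed {p : α × β | p.2 ∈ K p.1}) (hK : LowerHemicontinuous K) :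
    IsClosed {p : α × β | p.2 ∈ bestResponse K u p.1} := by
  have hle : IsClosed {q : (α × β) × β | u (q.1.1, q.2) ≤ u q.1} :=
    isClosed_le (hu.comp (by fun_prop)) (hu.comp (by fun_prop))
  exact hgraph.inter
    (isClosed_setOf_forall_mem_of_lowerHemicontinuous (hK.comp continuous_fst) hle)

end BestResponse

lemma bestResponse_infEDist_subset {α β : Type*} [PseudoEMetricSpace α] [PseudoEMetricSpace β]
    {K P : α → Set β} (hP : HasOpenCGraph P) {a : α} (hPK : (P a ∩ K a).Nonempty) :
    bestResponse K (fun q => Metric.infEDist q {q | q.2 ∈ P q.1}ᶜ) a ⊆ P a := by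
  rintro z ⟨-, hz⟩
  obtain ⟨w, hwP, hwK⟩ := hPK
  by_contra hzP
  have hz0 : Metric.infEDist (a, z) {q : α × β | q.2 ∈ P q.1}ᶜ = 0 :=
    Metric.infEDist_zero_of_mem hzP
  have hw0 : Metric.infEDist (a, w) {q : α × β | q.2 ∈ P q.1}ᶜ = 0 :=
    nonpos_iff_eq_zero.1 ((hz hwK).trans hz0.le)
  exact (Metric.mem_iff_infEDist_zero_of_closed hP.isClosed_compl).2 hw0 hwP

lemma closure_convexHull_subset_convexHull_of_isOpen {E : Type*} [AddCommGroup E] [Module ℝ E]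
    [TopologicalSpace E] [IsTopologicalAddGroup E] [ContinuousSMul ℝ E] {A U : Set E}
    (hA : IsCompact A) (hU : IsOpen U) (hAU : A ⊆ U) :
    closure (convexHull ℝ A) ⊆ convexHull ℝ U := by
  rcases A.eq_empty_or_nonempty with rfl | hne
  · simp
  intro z hz
  by_contra hzU
  obtain ⟨f, hf⟩ := geometric_hahn_banach_open_point (convex_convexHull ℝ U) hU.convexHull hzU
  obtain ⟨m, hm, hmax⟩ := hA.exists_isMaxOn hne f.continuous.continuousOn
  have hhalf : closure (convexHull ℝ A) ⊆ {w | f w ≤ f m} :=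
    closure_minimal (convexHull_min hmax (convex_halfSpace_le f.isLinear (f m)))
      (isClosed_le f.continuous continuous_const)
  exact (hf m (subset_convexHull ℝ U (hAU hm))).not_ge (hhalf hz)

theorem exists_generalized_nash_equilibrium {ι : Type*} [Finite ι] {E : ι → Type*}
    [∀ i, NormedAddCommGroup (E i)] [∀ i, NormedSpace ℝ (E i)] [∀ i, FiniteDimensional ℝ (E i)]
    {K P : ∀ i, (∀ j, E j) → Set (E i)} {C : ∀ i, Set (E i)}
    (hgraph : ∀ i, IsClosed {q : (∀ j, E j) × E i | q.2 ∈ K i q.1})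
    (hlsc : ∀ i, LowerHemicontinuous (K i)) (hne : ∀ i y, (K i y).Nonempty)
    (hconv : ∀ i y, Convex ℝ (K i y)) (hC : ∀ i, IsCompact (C i)) (hKC : ∀ i y, K i y ⊆ C i)
    (hP : ∀ i, HasOpenCGraph (P i))
    (hirr : ∀ y, (∀ i, y i ∈ K i y) → ∀ i, y i ∉ convexHull ℝ (P i y)) :
    ∃ y, ∀ i, y i ∈ K i y ∧ P i y ∩ K i y = ∅ := by
  have := Fintype.ofFinite ι
  let B (i : ι) := bestResponse (K i) fun q => Metric.infEDist q {q | q.2 ∈ P i q.1}ᶜ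
  have hKclosed (i : ι) (y : ∀ j, E j) : IsClosed (K i y) :=
    (hgraph i).preimage (Continuous.prodMk_right y)
  have hBgraph (i : ι) : IsClosed {q : (∀ j, E j) × E i | q.2 ∈ B i q.1} :=
    isClosed_graph_bestResponse Metric.continuous_infEDist (hgraph i) (hlsc i)
  have hBC (i : ι) (y : ∀ j, E j) : B i y ⊆ C i := (bestResponse_subset _ y).trans (hKC i y)
  have hBne (i : ι) (y : ∀ j, E j) : (B i y).Nonempty :=
    bestResponse_nonempty Metric.continuous_infEDist (hne i y)
      ((hC i).of_isClosed_subset (hKclosed i y) (hKC i y))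
  have hFgraph : IsClosed {q : (∀ j, E j) × (∀ j, E j) | q.2 ∈ univ.pi fun i => B i q.1} := by
    simp only [mem_univ_pi, ofPred_forall]
    exact isClosed_iInter fun i => (hBgraph i).preimage
      (continuous_fst.prodMk ((continuous_apply i).comp continuous_snd))
  have hCcompact : IsCompact (univ.pi C) := isCompact_univ_pi hC
  have hFC (y : ∀ j, E j) : univ.pi (fun i => B i y) ⊆ univ.pi C := pi_mono fun i _ => hBC i y
  obtain ⟨y, hy⟩ := exists_mem_closure_convexHull_of_upperHemicontinuous
    (upperHemicontinuous_of_isClosed_graph hFgraph hCcompact hFC)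
    (fun y => univ_pi_nonempty_iff.2 fun i => hBne i y)
    (hCcompact.isBounded.subset (iUnion_subset hFC))
  rw [convexHull_pi, closure_pi_set, mem_univ_pi] at hy
  have hyK (i : ι) : y i ∈ K i y :=
    closure_minimal (convexHull_min (bestResponse_subset _ y) (hconv i y)) (hKclosed i y) (hy i)
  refine ⟨y, fun i => ⟨hyK i, not_nonempty_iff_eq_empty.1 fun hPK => hirr y hyK i ?_⟩⟩
  exact closure_convexHull_subset_convexHull_of_isOpen
    ((hC i).of_isClosed_subset ((hBgraph i).preimage (Continuous.prodMk_right y)) (hBC i y))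
    ((hP i).preimage (Continuous.prodMk_right y)) (bestResponse_infEDist_subset (hP i) hPK) (hy i)

end Equilibrium

section ProjectedSolution

open Set

lemma exists_lipschitzWith_one_norm_sub_eq_iInf {E : Type*} [NormedAddCommGroup E]
    [InnerProductSpace ℝ E] {X : Set E} (hne : X.Nonempty) (hX : IsComplete X)
    (hconv : Convex ℝ X) :
    ∃ p : E → E, LipschitzWith 1 p ∧ ∀ y, p y ∈ X ∧ ‖y - p y‖ = ⨅ w : X, ‖y - w‖ := by
  choose p hpX hp using exists_norm_eq_iInf_of_complete_convex hne hX hconv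
  refine ⟨p, LipschitzWith.of_dist_le_mul fun a b => ?_, fun y => ⟨hpX y, hp y⟩⟩
  have hobtuse (y w : E) (hw : w ∈ X) : ⟪y - p y, w - p y⟫ ≤ 0 :=
    (norm_eq_iInf_iff_real_inner_le_zero hconv (hpX y)).1 (hp y) w hw
  have hsq : ‖p a - p b‖ * ‖p a - p b‖ ≤ ‖a - b‖ * ‖p a - p b‖ := calc
    ‖p a - p b‖ * ‖p a - p b‖ = ⟪p a - p b, p a - p b⟫ := (real_inner_self_eq_norm_mul_norm _).symm
    _ = ⟪a - b, p a - p b⟫ + ⟪a - p a, p b - p a⟫ + ⟪b - p b, p a - p b⟫ := by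
      simp only [inner_sub_left, inner_sub_right]
      ring
    _ ≤ ⟪a - b, p a - p b⟫ := by
      linarith [hobtuse a (p b) (hpX b), hobtuse b (p a) (hpX a)]
    _ ≤ ‖a - b‖ * ‖p a - p b‖ := real_inner_le_norm _ _
  rw [dist_eq_norm, dist_eq_norm, NNReal.coe_one, one_mul]
  rcases (norm_nonneg (p a - p b)).eq_or_lt with h0 | hpos
  · rw [← h0]
    exact norm_nonneg _
  · exact le_of_mul_le_mul_right hsq hpos

theorem exists_projected_solution_GNEP_noncompact_general {ι : Type*} [Fintype ι] {E : ι → Type*}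
    [∀ i, NormedAddCommGroup (E i)] [∀ i, InnerProductSpace ℝ (E i)]
    [∀ i, FiniteDimensional ℝ (E i)] {K P : ∀ i, PiLp 2 E → Set (E i)} {X : Set (PiLp 2 E)}
    (hXne : X.Nonempty) (hXclosed : IsClosed X) (hXconv : Convex ℝ X)
    (hgraph : ∀ i, IsClosed {q : PiLp 2 E × E i | q.1 ∈ X ∧ q.2 ∈ K i q.1})
    (hlsc : ∀ i, LowerHemicontinuousOn (K i) X) (hne : ∀ i, ∀ x ∈ X, (K i x).Nonempty)
    (hconv : ∀ i, ∀ x ∈ X, Convex ℝ (K i x)) (hP : ∀ i, HasOpenCGraph (P i))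
    (hirr : ∀ x ∈ X, ∀ y : PiLp 2 E, (∀ i, y i ∈ K i x) → ∀ i, y i ∉ convexHull ℝ (P i y))
    (hcompact : ∀ i, IsCompact (closure (⋃ x ∈ X, K i x))) :
    ∃ x ∈ X, ∃ y : PiLp 2 E, (‖y - x‖ = ⨅ w : X, ‖y - (w : PiLp 2 E)‖) ∧
      ∀ i, y i ∈ K i x ∧ P i y ∩ K i x = ∅ := by
  obtain ⟨p, hplip, hp⟩ :=
    exists_lipschitzWith_one_norm_sub_eq_iInf hXne hXclosed.isComplete hXconv
  have htoLp : Continuous (WithLp.toLp 2 : (∀ i, E i) → PiLp 2 E) := PiLp.continuous_toLp 2 E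
  let π (y : ∀ i, E i) : PiLp 2 E := p (WithLp.toLp 2 y)
  have hπ : Continuous π := hplip.continuous.comp htoLp
  have hπX (y : ∀ i, E i) : π y ∈ X := (hp _).1
  obtain ⟨y, hy⟩ := exists_generalized_nash_equilibrium
    (K := fun i y => K i (π y)) (P := fun i y => P i (WithLp.toLp 2 y))
    (fun i => by simpa [hπX] using (hgraph i).preimage (hπ.prodMap continuous_id))
    (fun i => lowerHemicontinuousOn_univ_iff.1 <|
      (hlsc i).comp hπ.continuousOn fun y _ => hπX y)
    (fun i y => hne i _ (hπX y)) (fun i y => hconv i _ (hπX y)) hcompact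
    (fun i y => (subset_biUnion_of_mem (u := K i) (hπX y)).trans subset_closure)
    (fun i => (hP i).comp htoLp) (fun y hy => hirr _ (hπX y) _ hy)
  exact ⟨π y, hπX y, WithLp.toLp 2 y, (hp _).2, hy⟩

lemma LscOn.lowerHemicontinuousOn {α β : Type*} [TopologicalSpace α] [TopologicalSpace β]
    {F : α → Set β} {A : Set α} (hF : LscOn F A) : LowerHemicontinuousOn F A :=
  lowerHemicontinuousOn_iff.2 fun a ha => lowerHemicontinuousWithinAt_iff.2 fun V hV hFV =>
    let ⟨U, hU, haU, hUV⟩ := hF a ha V hV hFV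
    mem_nhdsWithin.2 ⟨U, hU, haU, hUV⟩

section PiLp

variable {ι : Type*} {E : ι → Type*} {C : ∀ i, Set (E i)}

lemma nonempty_setOf_forall_mem_piLp (hC : ∀ i, (C i).Nonempty) :
    {x : PiLp 2 E | ∀ i, x i ∈ C i}.Nonempty :=
  ⟨WithLp.toLp 2 fun i => (hC i).some, fun i => (hC i).some_mem⟩

lemma isClosed_setOf_forall_mem_piLp [∀ i, TopologicalSpace (E i)] (hC : ∀ i, IsClosed (C i)) :
    IsClosed {x : PiLp 2 E | ∀ i, x i ∈ C i} := by
  rw [ofPred_forall]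
  exact isClosed_iInter fun i => (hC i).preimage (PiLp.continuous_apply 2 E i)

lemma convex_setOf_forall_mem_piLp [∀ i, AddCommGroup (E i)] [∀ i, Module ℝ (E i)]
    (hC : ∀ i, Convex ℝ (C i)) : Convex ℝ {x : PiLp 2 E | ∀ i, x i ∈ C i} :=
  fun _ hx _ hy _ _ ha hb hab i => hC i (hx i) (hy i) ha hb hab

end PiLp

end ProjectedSolution

/-- Under (a) each `X_i` nonempty closed convex (possibly
unbounded), (b) each `K_i` closed and l.s.c. with nonempty convex values on `X`,
(c) each `P_i` with open graph, (d) `x_i ∉ co(P_i(x))` for every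
`x ∈ ∏_i co(cl(K_i(X)))`, and with each `K_i(X)` relatively compact, the
generalized Nash game `Γ = (X_i, K_i, P_i)_i` admits a projected solution. -/
theorem exists_projected_solution_GNEP_noncompact
    (N : ℕ) (hN : 1 ≤ N) (d : Fin N → ℕ)
    (Xi : ∀ i : Fin N, Set (Vec (d i)))
    (Ki : ∀ i : Fin N, Strat N d → Set (Vec (d i)))
    (P : ∀ i : Fin N, Strat N d → Set (Vec (d i)))
    -- the joint choice set `X = ∏ X_i`
    (X : Set (Strat N d)) (hX : X = {x : Strat N d | ∀ i, x i ∈ Xi i})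
    -- the set `∏_i co(cl(K_i(X)))`
    (Q : Set (Strat N d))
    (hQ : Q = {y : Strat N d | ∀ i, y i ∈ convexHull ℝ (closure (⋃ x ∈ X, Ki i x))})
    -- (a) each `X_i` is nonempty, closed and convex
    (ha : ∀ i, (Xi i).Nonempty ∧ IsClosed (Xi i) ∧ Convex ℝ (Xi i))
    -- (b) each `K_i` is a closed l.s.c. map with nonempty convex values on `X`
    (hbclosed : ∀ i, IsClosed {q : Strat N d × Vec (d i) | q.1 ∈ X ∧ q.2 ∈ Ki i q.1})
    (hblsc : ∀ i, LscOn (Ki i) X)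
    (hbval : ∀ i, ∀ x ∈ X, (Ki i x).Nonempty ∧ Convex ℝ (Ki i x))
    -- (c) each `P_i` has open graph
    (hc : ∀ i, IsOpen {q : Strat N d × Vec (d i) | q.2 ∈ P i q.1})
    -- (d) `x_i ∉ co(P_i(x))` for every `x ∈ Q`
    (hd : ∀ i, ∀ x ∈ Q, x i ∉ convexHull ℝ (P i x))
    -- each `K_i(X)` is relatively compact
    (hKrel : ∀ i, IsCompact (closure (⋃ x ∈ X, Ki i x))) :
    -- the GNEP `Γ` admits a projected solution
    ∃ xt ∈ X, ∃ yt : Strat N d,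
      (‖yt - xt‖ = ⨅ w : X, ‖yt - (w : Strat N d)‖) ∧
      ∀ i : Fin N, yt i ∈ Ki i xt ∧ P i yt ∩ Ki i xt = ∅ := by
  subst hX hQ
  refine exists_projected_solution_GNEP_noncompact_general
    (nonempty_setOf_forall_mem_piLp fun i => (ha i).1)
    (isClosed_setOf_forall_mem_piLp fun i => (ha i).2.1)
    (convex_setOf_forall_mem_piLp fun i => (ha i).2.2)
    hbclosed (fun i => (hblsc i).lowerHemicontinuousOn) (fun i x hx => (hbval i x hx).1)
    (fun i x hx => (hbval i x hx).2) hc (fun x hx y hy i => hd i y fun j => ?_) hKrel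
  exact subset_convexHull ℝ _ (subset_closure (Set.mem_biUnion hx (hy j)))
end
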